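/- arXiv:0902.4448 — 5 statements merged into one kernel-verified Lean document; each statement's English description precedes it below -/
import Mathlib

section
/- Let P be a lower finite poset and let κ and λ be infinite cardinals. Then (κ,<λ)⤳P holds if and only if for every isotone map G : [κ]^{<ω} → [κ]^{<λ} there exists an injective map g : J(P) → κ such that for all x ≤ y in P, G(g''J_P(x)) ∩ g''J_P(y) ⊆ g''J_P(x). -/
/-!
Over a lower finite poset `P`, every element is the join of the join-irreducible elements below it,
so `x ↦ J_P(x)` is an order embedding of `P` into the finite subsets of `J(P)`.

*From `P` to `J(P)`*: restrict `f : P → κ` to `J(P)`; since `G` is isotone, enlarging `g''J_P(x)` to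
`f''(P↓x)` only enlarges the value of `G`.

*From `J(P)` to `P`*: fix a bijection `φ : [κ]^{<ω} ≃ κ` and put `f x = φ (g''J_P(x))`. The set
`f''(P↓x)` is the `φ`-image of a family of subsets of the finite set `g''J_P(x)`. Hence `F` is
controlled by the isotone map sending `X` to the union of all finite sets `W` with
`φ W ∈ F (φ''U)` for some family `U` of finite subsets of `X` (`supportMap`). For finite `X` there
are only finitely many such families, so the value has size `< λ` without any regularity
assumption on `λ`.
-/

universe u v w

open Cardinal

/-- The relation `(κ,<λ)⤳P`: for every map `F` from the powerset of (a set of size) `κ`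
to the subsets of size `< λ`, there is an injective `f : P → κ` such that
`F(f''(P↓x)) ∩ f''(P↓y) ⊆ f''(P↓x)` whenever `x ≤ y` in `P`. -/
def Leadsto (κ lam : Cardinal.{u}) (P : Type v) [PartialOrder P] : Prop :=
  ∀ A : Type u, #A = κ →
    ∀ F : Set A → Set A, (∀ X : Set A, #↥(F X) < lam) →
      ∃ f : P → A, Function.Injective f ∧
        ∀ x y : P, x ≤ y →
          F (f '' Set.Iic x) ∩ f '' Set.Iic y ⊆ f '' Set.Iic x

/-- `p` is join-irreducible: whenever `p` is the least upper bound of a finite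
(possibly empty) subset `X` of `P`, then `p ∈ X`. -/
def JoinIrred (P : Type v) [PartialOrder P] (p : P) : Prop :=
  ∀ X : Finset P, IsLUB (↑X : Set P) p → p ∈ X

/-- In a lower finite poset, `x` lies below every upper bound of `J_P(x)`; hence `x` is the join
of `J_P(x)`. -/
lemma le_of_joinIrred_le {P : Type v} [PartialOrder P] (hP : ∀ x : P, (Set.Iic x).Finite)
    (x : P) : ∀ z : P, (∀ j : P, JoinIrred P j → j ≤ x → j ≤ z) → x ≤ z := by
  -- Strong induction on the cardinality of `P↓x`.
  induction h : (Set.Iic x).ncard using Nat.strong_induction_on generalizing x with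
  | _ n ih =>
    intro z hz
    by_cases hx : JoinIrred P x
    · exact hz x hx le_rfl
    · unfold JoinIrred at hx
      push Not at hx
      obtain ⟨X, hX, hxX⟩ := hx
      refine hX.2 fun t ht => ?_
      have htx : t < x := lt_of_le_of_ne (hX.1 ht) fun e => hxX (e ▸ ht)
      refine ih _ ?_ t rfl z fun j hj hjt => hz j hj (hjt.trans htx.le)
      rw [← h]
      exact Set.ncard_lt_ncard (Set.Iic_ssubset_Iic.2 htx) (hP x)

lemma mk_biUnion_lt_of_finite {A : Type u} {ι : Type w} {lam : Cardinal.{u}} (hlam : ℵ₀ ≤ lam)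
    (H : ι → Set A) (hH : ∀ i, #↥(H i) < lam) {S : Set ι} (hS : S.Finite) :
    #↥(⋃ i ∈ S, H i) < lam := by
  induction S, hS using Set.Finite.induction_on with
  | empty =>
    simpa using lt_of_lt_of_le aleph0_pos hlam
  | insert _ _ ih =>
    rw [Set.biUnion_insert]
    exact (mk_union_le _ _).trans_lt (add_lt_of_lt hlam (hH _) ih)

lemma mk_biUnion_finset_lt {A : Type u} {lam : Cardinal.{u}} (hlam : ℵ₀ ≤ lam)
    (s : A → Finset A) {V : Set A} (hV : #↥V < lam) :
    #↥(⋃ v ∈ V, (s v : Set A)) < lam := by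
  by_cases hfin : V.Finite
  · exact (lt_aleph0_iff_set_finite.2 (hfin.biUnion fun v _ => (s v).finite_toSet)).trans_le hlam
  · have hinf : ℵ₀ ≤ #↥V := by
      rw [← not_lt, lt_aleph0_iff_set_finite]
      exact hfin
    refine lt_of_le_of_lt ?_ hV
    calc #↥(⋃ v ∈ V, (s v : Set A)) ≤ #↥V * ⨆ v : V, #↥(s v : Set A) := mk_biUnion_le _ _
      _ ≤ #↥V * ℵ₀ := by
        gcongr
        exact ciSup_le' fun v => (lt_aleph0_iff_set_finite.2 (s v).finite_toSet).le
      _ = #↥V := mul_aleph0_eq hinf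

/-- The union of all finite `W ⊆ A` coded, through `φ`, by an element of `F (φ''U)` for some family
`U` of finite subsets of `X`. Quantifying over all `U` makes the map isotone. -/
def supportMap {A : Type u} (φ : Finset A ≃ A) (F : Set A → Set A) (X : Set A) : Set A :=
  {a | ∃ U : Set (Finset A), (∀ Z ∈ U, (Z : Set A) ⊆ X) ∧
    ∃ W : Finset A, φ W ∈ F (φ '' U) ∧ a ∈ W}

lemma supportMap_mono {A : Type u} (φ : Finset A ≃ A) (F : Set A → Set A) {X Y : Set A}
    (h : X ⊆ Y) : supportMap φ F X ⊆ supportMap φ F Y := by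
  rintro a ⟨U, hU, hW⟩
  exact ⟨U, fun Z hZ => (hU Z hZ).trans h, hW⟩

lemma mk_supportMap_lt {A : Type u} {lam : Cardinal.{u}} (hlam : ℵ₀ ≤ lam) (φ : Finset A ≃ A)
    (F : Set A → Set A) (hF : ∀ X, #↥(F X) < lam) {X : Set A} (hX : X.Finite) :
    #↥(supportMap φ F X) < lam := by
  have hfam : {Z : Finset A | (Z : Set A) ⊆ X}.Finite :=
    (hX.finite_subsets).preimage Finset.coe_injective.injOn
  have hS : {U : Set (Finset A) | U ⊆ {Z : Finset A | (Z : Set A) ⊆ X}}.Finite :=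
    hfam.finite_subsets
  refine lt_of_le_of_lt (mk_le_mk_of_subset ?_) (mk_biUnion_finset_lt hlam φ.symm
    (mk_biUnion_lt_of_finite hlam (fun U => F (φ '' U)) (fun U => hF _) hS))
  rintro a ⟨U, hU, W, hW, ha⟩
  simp only [Set.mem_iUnion]
  exact ⟨φ W, ⟨U, hU, hW⟩, by simpa using ha⟩

/-- For a lower finite poset `P` and infinite cardinals `κ`, `λ`, the relation
`(κ,<λ)⤳P` holds iff for every isotone `G : [κ]^{<ω} → [κ]^{<λ}` there is an injective
`g : J(P) → κ` with `G(g''J_P(x)) ∩ g''J_P(y) ⊆ g''J_P(x)` for all `x ≤ y` in `P`. -/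
theorem stmt1 (P : Type v) [PartialOrder P] (hPlf : ∀ x : P, (Set.Iic x).Finite)
    (κ lam : Cardinal.{u}) (hκ : ℵ₀ ≤ κ) (hlam : ℵ₀ ≤ lam) :
    Leadsto κ lam P ↔
      ∀ A : Type u, #A = κ →
        ∀ G : Set A → Set A, (∀ X Y : Set A, X ⊆ Y → G X ⊆ G Y) →
          (∀ X : Set A, X.Finite → #↥(G X) < lam) →
          ∃ g : {p : P // JoinIrred P p} → A, Function.Injective g ∧
            ∀ x y : P, x ≤ y →
              G (g '' {j | (j : P) ≤ x}) ∩ g '' {j | (j : P) ≤ y} ⊆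
                g '' {j | (j : P) ≤ x} := by
  constructor
  · intro h A hA G hG hGc
    classical
    -- `G` is bounded only on finite sets, so it is truncated on the infinite ones.
    obtain ⟨f, hf, hfF⟩ := h A hA (fun X => if X.Finite then G X else ∅) (fun X => by
      split_ifs with hX
      · exact hGc X hX
      · simpa using lt_of_lt_of_le aleph0_pos hlam)
    refine ⟨fun j => f j, hf.comp Subtype.val_injective, ?_⟩
    rintro x y hxy _ ⟨hG1, j, hj, rfl⟩
    have hsub : (fun j : {p : P // JoinIrred P p} => f j) '' {j | (j : P) ≤ x} ⊆
        f '' Set.Iic x := by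
      rintro _ ⟨i, hi, rfl⟩
      exact ⟨i, hi, rfl⟩
    have hmem : f j ∈ f '' Set.Iic x := by
      refine hfF x y hxy ⟨?_, j, hj, rfl⟩
      simp only [if_pos ((hPlf x).image f)]
      exact hG _ _ hsub hG1
    obtain ⟨p, hp, hpj⟩ := hmem
    exact ⟨j, (hf hpj).symm.le.trans hp, rfl⟩
  · intro h A hA F hF
    have : Infinite A := infinite_iff.2 (hA ▸ hκ)
    obtain ⟨φ⟩ : Nonempty (Finset A ≃ A) := Cardinal.eq.1 (mk_finset_of_infinite A)
    obtain ⟨g, hg, hgG⟩ := h A hA (supportMap φ F) (fun X Y => supportMap_mono φ F)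
      (fun X hX => mk_supportMap_lt hlam φ F hF hX)
    have hfin : ∀ x : P, (g '' {j | (j : P) ≤ x}).Finite := fun x =>
      ((hPlf x).preimage Subtype.val_injective.injOn).image g
    have hle : ∀ x y : P, g '' {j | (j : P) ≤ x} ⊆ g '' {j | (j : P) ≤ y} → x ≤ y := by
      intro x y hxy
      refine le_of_joinIrred_le hPlf x y fun j hj hjx => ?_
      exact (Set.image_subset_image_iff hg).1 hxy (show (⟨j, hj⟩ : {p : P // JoinIrred P p}) ∈ _
        from hjx)
    have hmono : ∀ x y : P, x ≤ y → g '' {j | (j : P) ≤ x} ⊆ g '' {j | (j : P) ≤ y} :=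
      fun x y hxy => Set.image_mono fun j hj => le_trans hj hxy
    refine ⟨fun x => φ (hfin x).toFinset, fun x y hxy => ?_, ?_⟩
    · have heq := Set.Finite.toFinset_inj.1 (φ.injective hxy)
      exact le_antisymm (hle x y heq.le) (hle y x heq.ge)
    · rintro x y hxy _ ⟨hFx, z, hz, rfl⟩
      refine ⟨z, hle z x fun a ha => hgG x y hxy ⟨?_, hmono z y hz ha⟩, rfl⟩
      refine ⟨(fun t => (hfin t).toFinset) '' Set.Iic x, ?_, (hfin z).toFinset, ?_, by simpa using ha⟩
      · rintro _ ⟨t, ht, rfl⟩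
        simpa only [Set.Finite.coe_toFinset] using hmono t x ht
      · rwa [Set.image_image]
end

section
/- Let P be a finite poset that is not an antichain, and let n be the number of join-irreducible elements of P. Then n ≥ 1 and the relation (κ^{+(n-1)},<κ)⤳P holds for every infinite cardinal κ. -/
/-!
Every element `z` of `P` is determined by the set `J z` of join-irreducible elements below it
(`exists_joinIrred`). Since the ground set `A` is infinite, there is a bijection `e` between the
finite subsets of `A` and `A`, so it is enough to place the `n` join-irreducible elements at
points `a p` of `A` and to let `f z = e {a p | p ∈ J z}`.

For a finite `H ⊆ A`, let `Φ H` be the union of the finite sets coded, through `e`, by members of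
`F S`, where `S` ranges over the sets of codes of subsets of `H`. There are finitely many such
`S`, so `#(Φ H) < κ`. Kuratowski's free set theorem (`exists_free`) provides `n` points `a p` none
of which belongs to `Φ` of the set of the others, hence, `Φ` being monotone, to `Φ` of any set of
the others. If `z ≰ x`, some join-irreducible `p ≤ z` satisfies `p ≰ x`; then
`f z ∈ F (f '' Iic x)` would give `a p ∈ Φ {a q | q ∈ J x}`, against freeness.
-/

universe u v w

open Cardinal

/-- The `n`-th cardinal successor `κ⁺ⁿ`. -/
noncomputable def succN (κ : Cardinal.{u}) (n : ℕ) : Cardinal.{u} := Order.succ^[n] κ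

lemma le_succN {κ : Cardinal.{u}} (m : ℕ) : κ ≤ succN κ m := by
  induction m with
  | zero => exact le_rfl
  | succ m ih =>
    rw [succN, Function.iterate_succ_apply']
    exact ih.trans (Order.le_succ _)

/-- A union of fewer than `κ` finite sets has fewer than `κ` elements, `κ` being infinite but
possibly singular or equal to `ℵ₀`. -/
lemma mk_biUnion_finset_lt_s4 {A B : Type u} {κ : Cardinal.{u}} (hκ : ℵ₀ ≤ κ) (G : Set A)
    (hG : #G < κ) (d : A → Finset B) : #↥(⋃ c ∈ G, (d c : Set B)) < κ := by
  rcases lt_or_ge #G ℵ₀ with h | h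
  · have hf : G.Finite := Cardinal.lt_aleph0_iff_set_finite.1 h
    exact (Cardinal.lt_aleph0_iff_set_finite.2
      (hf.biUnion fun c _ => (d c).finite_toSet)).trans_le hκ
  · rw [Set.biUnion_eq_iUnion]
    refine (Cardinal.mk_iUnion_le _).trans_lt (lt_of_le_of_lt ?_ hG)
    calc #G * ⨆ c : G, #↥(d c : Set B) ≤ #G * ℵ₀ := by
          gcongr
          exact ciSup_le' fun c => (Cardinal.lt_aleph0_of_finite _).le
      _ = #G := Cardinal.mul_aleph0_eq h

lemma mk_biUnion_finite_lt {A B : Type u} {κ : Cardinal.{u}} (hκ : ℵ₀ ≤ κ) {G : Set A}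
    (hG : G.Finite) (D : A → Set B) (hD : ∀ c, #(D c) < κ) : #↥(⋃ c ∈ G, D c) < κ := by
  induction G, hG using Set.Finite.induction_on with
  | empty => simpa using Cardinal.aleph0_pos.trans_le hκ
  | insert _ _ ih =>
    rw [Set.biUnion_insert]
    exact (Cardinal.mk_union_le _ _).trans_lt (Cardinal.add_lt_of_lt hκ (hD _) ih)

open Classical in
/-- Kuratowski's free set theorem: a set of size at least `κ⁺ᵐ` has a free subset with `m + 1`
elements for any set mapping on finite sets with values of size `< κ`. -/
lemma exists_free {A : Type u} {κ : Cardinal.{u}} (hκ : ℵ₀ ≤ κ) (m : ℕ) :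
    ∀ B : Set A, succN κ m ≤ #B → ∀ Φ : Finset A → Set A, (∀ H, #(Φ H) < κ) →
      ∃ s : Finset A, (s : Set A) ⊆ B ∧ s.card = m + 1 ∧ ∀ a ∈ s, a ∉ Φ (s.erase a) := by
  induction m with
  | zero =>
    intro B hB Φ hΦ
    obtain ⟨a, haB, ha⟩ : ∃ a ∈ B, a ∉ Φ ∅ := by
      by_contra! h
      exact ((Cardinal.mk_le_mk_of_subset h).trans_lt (hΦ ∅)).not_ge hB
    refine ⟨{a}, by simpa using haB, by simp, ?_⟩
    intro b hb
    obtain rfl := Finset.mem_singleton.1 hb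
    simpa using ha
  | succ m ih =>
    intro B hB Φ hΦ
    have hlt : succN κ m < #B := by
      refine lt_of_lt_of_le ?_ hB
      rw [succN, succN, Function.iterate_succ_apply']
      exact Order.lt_succ _
    have hinf : ℵ₀ ≤ succN κ m := hκ.trans (le_succN m)
    obtain ⟨C, hCB, hC⟩ := Cardinal.le_mk_iff_exists_subset.1 hlt.le
    -- A point outside `C` and outside `Φ H` for all finite `H ⊆ C`, found by counting.
    obtain ⟨a, haB, ha⟩ : ∃ a ∈ B, a ∉ C ∪
        ⋃ H : Finset C, Φ (H.map (Function.Embedding.subtype _)) := by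
      by_contra! h
      refine ((Cardinal.mk_le_mk_of_subset h).trans ?_).not_gt hlt
      refine (Cardinal.mk_union_le _ _).trans (Cardinal.add_le_of_le hinf hC.le ?_)
      refine (Cardinal.mk_iUnion_le _).trans ?_
      have : Infinite C := by
        rw [Cardinal.infinite_iff, hC]; exact hinf
      rw [Cardinal.mk_finset_of_infinite, hC]
      exact Cardinal.mul_le_of_le hinf le_rfl
        (ciSup_le' fun H => (hΦ _).le.trans (le_succN m))
    simp only [Set.mem_union, Set.mem_iUnion, not_or, not_exists] at ha
    obtain ⟨s, hsC, hs, hfree⟩ := ih C hC.ge (fun H => Φ (insert a H)) (fun H => hΦ _)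
    have has : a ∉ s := fun h => ha.1 (hsC h)
    refine ⟨insert a s, ?_, by rw [Finset.card_insert_of_notMem has, hs], ?_⟩
    · rw [Finset.coe_insert]
      exact Set.insert_subset haB (hsC.trans hCB)
    · intro b hb
      rcases Finset.mem_insert.1 hb with rfl | hb
      · rw [Finset.erase_insert has]
        have := ha.2 (s.subtype (· ∈ C))
        rwa [Finset.subtype_map_of_mem fun x hx => hsC hx] at this
      · have hab : a ≠ b := by
          rintro rfl
          exact has hb
        rw [Finset.erase_insert_of_ne hab]
        exact hfree b hb

/-- The join-irreducible elements below `z` determine it: `z ≤ x` as soon as `x` bounds them all,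
so that `z` is their join. -/
lemma exists_joinIrred {P : Type v} [PartialOrder P] [Finite P] (x z : P) (h : ¬ z ≤ x) :
    ∃ p, JoinIrred P p ∧ p ≤ z ∧ ¬ p ≤ x := by
  induction z using WellFoundedLT.induction with
  | _ z ih =>
    by_cases hz : JoinIrred P z
    · exact ⟨z, hz, le_rfl, h⟩
    · simp only [JoinIrred, not_forall] at hz
      obtain ⟨X, hX, hzX⟩ := hz
      obtain ⟨y, hy, hyx⟩ : ∃ y ∈ X, ¬ y ≤ x := by
        by_contra! hc
        exact h (hX.2 fun y hy => hc y hy)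
      have hyz : y ≤ z := hX.1 hy
      obtain ⟨p, hp, hpy, hpx⟩ := ih y (lt_of_le_of_ne hyz fun e => hzX (e ▸ hy)) hyx
      exact ⟨p, hp, hpy.trans hyz, hpx⟩

/-- For a finite poset `P` which is not an antichain, the number `n` of join-irreducible
elements of `P` satisfies `n ≥ 1` and `(κ^{+(n-1)},<κ)⤳P` for every infinite `κ`. -/
theorem stmt4 (P : Type v) [PartialOrder P] [Finite P]
    (hP : ∃ x y : P, x < y)
    (n : ℕ) (hn : n = Nat.card {p : P // JoinIrred P p}) :
    1 ≤ n ∧ ∀ κ : Cardinal.{u}, ℵ₀ ≤ κ → Leadsto (succN κ (n - 1)) κ P := by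
  classical
  obtain ⟨x₀, y₀, hxy⟩ := hP
  have hn1 : 1 ≤ n := by
    obtain ⟨p, hp, -, -⟩ := exists_joinIrred x₀ y₀ hxy.not_ge
    have : Nonempty {p : P // JoinIrred P p} := ⟨⟨p, hp⟩⟩
    rw [hn]
    exact Nat.card_pos
  refine ⟨hn1, fun κ hκ A hA F hF => ?_⟩
  have : Infinite A := by
    rw [Cardinal.infinite_iff, hA]
    exact hκ.trans (le_succN _)
  obtain ⟨e⟩ : Nonempty (Finset A ≃ A) := Cardinal.eq.1 (Cardinal.mk_finset_of_infinite A)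
  -- `T H` is the finite family of all sets of codes of subsets of `H`.
  let T : Finset A → Set (Set A) := fun H => {S | S ⊆ e '' {K | K ⊆ H}}
  have hT : ∀ H, (T H).Finite := fun H =>
    ((Set.Finite.ofFinset H.powerset (by simp)).image e).finite_subsets
  let Φ : Finset A → Set A := fun H => ⋃ c ∈ ⋃ S ∈ T H, F S, (e.symm c : Set A)
  have hΦ : ∀ H, #(Φ H) < κ := fun H =>
    mk_biUnion_finset_lt_s4 hκ _ (mk_biUnion_finite_lt hκ (hT H) F hF) _
  have hΦmono : ∀ H H', H ⊆ H' → Φ H ⊆ Φ H' := fun H H' h =>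
    Set.biUnion_subset_biUnion_left (Set.biUnion_subset_biUnion_left fun S hS =>
      hS.trans (Set.image_mono fun K hK => Finset.Subset.trans hK h))
  obtain ⟨s, -, hs, hfree⟩ := exists_free hκ (n - 1) (Set.univ : Set A)
    (by rw [Cardinal.mk_univ, hA]) Φ hΦ
  have : Fintype P := Fintype.ofFinite P
  obtain ⟨a⟩ : Nonempty ({p : P // JoinIrred P p} ≃ s) := by
    rw [← Finite.card_eq, ← hn]
    simp only [Nat.card_eq_fintype_card, Fintype.card_coe]
    omega
  let J : P → Finset A := fun z =>
    (Finset.univ.filter fun p : {p : P // JoinIrred P p} => p.1 ≤ z).image fun p => (a p : A)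
  have hJ : ∀ p z, (a p : A) ∈ J z ↔ p.1 ≤ z := by
    intro p z
    simp only [J, Finset.mem_image, Finset.mem_filter, Finset.mem_univ, true_and]
    constructor
    · rintro ⟨q, hq, hqp⟩
      rwa [← a.injective (Subtype.ext hqp)]
    · exact fun h => ⟨p, h, rfl⟩
  have hJs : ∀ z, J z ⊆ s := by
    intro z b hb
    obtain ⟨p, -, rfl⟩ := Finset.mem_image.1 hb
    exact (a p).2
  have hJmono : ∀ z w, z ≤ w → J z ⊆ J w := fun z w h =>
    Finset.image_subset_image fun p hp => by
      simp only [Finset.mem_filter, Finset.mem_univ, true_and] at hp ⊢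
      exact hp.trans h
  have hJle : ∀ z w, J z ⊆ J w → z ≤ w := by
    intro z w h
    by_contra hc
    obtain ⟨p, hp, hpz, hpw⟩ := exists_joinIrred w z hc
    exact hpw ((hJ ⟨p, hp⟩ w).1 (h ((hJ ⟨p, hp⟩ z).2 hpz)))
  refine ⟨fun z => e (J z), fun z w h => ?_, ?_⟩
  · have h' : J z = J w := e.injective h
    exact le_antisymm (hJle _ _ h'.subset) (hJle _ _ h'.superset)
  · rintro x y - c ⟨hcF, z, -, rfl⟩
    refine ⟨z, ?_, rfl⟩
    by_contra hzx
    obtain ⟨p, hp, hpz, hpx⟩ := exists_joinIrred x z hzx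
    have hmem : (a ⟨p, hp⟩ : A) ∈ Φ (J x) := by
      refine Set.mem_biUnion (Set.mem_biUnion ?_ hcF) ?_
      · rintro _ ⟨w, hw, rfl⟩
        exact ⟨J w, hJmono w x hw, rfl⟩
      · simpa using (hJ ⟨p, hp⟩ z).2 hpz
    refine hfree _ (a ⟨p, hp⟩).2 (hΦmono _ _ (fun b hb => ?_) hmem)
    refine Finset.mem_erase.2 ⟨?_, hJs x hb⟩
    rintro rfl
    exact hpx ((hJ _ x).1 hb)
end

section
/- Let T be a well-founded tree and let κ be an infinite cardinal such that |T| ≤ κ and the cardinality of T↓p is strictly less than the cofinality of κ for each p ∈ T. Then the relation (κ,<κ)⤳T holds. -/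
/-!
Since `|T| ≤ κ`, the set `A` of size `κ` splits into pieces `A_t` (`t ∈ T`), each of size `κ`.
By well-founded recursion on `t`, choose `f t ∈ A_t` outside `⋃ x < t, F (f '' Iic x)`. This is
possible because a union of fewer than `cf κ` sets of size `< κ` has size `< κ`, so it cannot cover
`A_t`. Disjointness of the pieces makes `f` injective. If `x ≤ y`, `z ≤ y` and
`f z ∈ F (f '' Iic x)`, then `x < z` is excluded by the choice of `f z`, so `z ≤ x` because
`Iic y` is a chain.
-/

universe u v w

open Cardinal

/-- A union of fewer than `cf κ` sets of size `< κ` has size `< κ`; regularity is not needed. -/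
theorem mk_iUnion_lt_of_lt_cof {ι A : Type u} {κ : Cardinal.{u}} (hκ : ℵ₀ ≤ κ)
    (hι : #ι < κ.ord.cof) (S : ι → Set A) (hS : ∀ i, #(S i) < κ) : #(⋃ i, S i) < κ := by
  refine (mk_iUnion_le S).trans_lt (mul_lt_of_lt hκ (hι.trans_le ?_) ?_)
  · simpa using Ordinal.cof_le_card κ.ord
  · exact iSup_lt_of_lt_cof_ord hι hS

/-- The recursive construction of `f`, as a section of a map `π : A → T` whose fibres are the pieces
of size `κ`. -/
theorem exists_section_avoiding {T A : Type u} [PartialOrder T] [WellFoundedLT T]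
    {κ : Cardinal.{u}} (hκ : ℵ₀ ≤ κ) (hIic : ∀ p : T, #↥(Set.Iic p) < κ.ord.cof)
    (π : A → T) (hπ : ∀ t, #↥(π ⁻¹' {t}) = κ)
    (F : Set A → Set A) (hF : ∀ X : Set A, #↥(F X) < κ) :
    ∃ f : T → A, (∀ t, π (f t) = t) ∧ ∀ x t, x < t → f t ∉ F (f '' Set.Iic x) := by
  have key : ∀ (t : T) (g : ∀ x, x < t → A), ∃ a, π a = t ∧
      ∀ x (hx : x < t), a ∉ F {b | ∃ z, ∃ hz : z ≤ x, g z (hz.trans_lt hx) = b} := by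
    intro t g
    have hU := mk_iUnion_lt_of_lt_cof hκ
      ((mk_le_mk_of_subset Set.Iio_subset_Iic_self).trans_lt (hIic t))
      (fun x : Set.Iio t => F {b | ∃ z, ∃ hz : z ≤ x.1, g z (hz.trans_lt x.2) = b})
      (fun _ => hF _)
    by_contra! hcon
    refine hU.not_ge ((hπ t).symm.le.trans (mk_le_mk_of_subset fun a ha => ?_))
    obtain ⟨x, hx, hax⟩ := hcon a ha
    exact Set.mem_iUnion.2 ⟨⟨x, hx⟩, hax⟩
  choose step hstep using key
  let f : T → A := wellFounded_lt.fix step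
  have hf : ∀ t, f t = step t (fun x _ => f x) := fun t => wellFounded_lt.fix_eq step t
  refine ⟨f, fun t => ?_, fun x t hx => ?_⟩
  · rw [hf]; exact (hstep t _).1
  · have h := (hstep t fun x _ => f x).2 x hx
    rw [← hf] at h
    simpa only [Set.image, Set.mem_Iic, exists_prop] using h

/-- Let `T` be a well-founded tree and `κ` an infinite cardinal with `|T| ≤ κ` and
`|T↓p| < cf(κ)` for each `p ∈ T`. Then `(κ,<κ)⤳T`. -/
theorem stmt5 (T : Type u) [PartialOrder T] [OrderBot T] [WellFoundedLT T]
    (hchain : ∀ a : T, IsChain (· ≤ ·) (Set.Iic a))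
    (κ : Cardinal.{u}) (hκ : ℵ₀ ≤ κ) (hT : #T ≤ κ)
    (hIic : ∀ p : T, #↥(Set.Iic p) < κ.ord.cof) :
    Leadsto κ κ T := by
  intro A hA F hF
  obtain ⟨e⟩ : Nonempty (A ≃ T × A) := by
    rw [← Cardinal.eq, mk_prod, lift_id, lift_id, hA, mul_eq_right hκ hT (mk_ne_zero T)]
  have hπ : ∀ t, #↥((fun a => (e a).1) ⁻¹' {t}) = κ := by
    intro t
    refine le_antisymm ((mk_set_le _).trans hA.le) ?_
    rw [← hA]
    refine mk_le_of_injective (f := fun a => ⟨e.symm (t, a), by simp⟩) fun a b h => ?_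
    simpa using h
  obtain ⟨f, hf, havoid⟩ := exists_section_avoiding hκ hIic _ hπ F hF
  refine ⟨f, Function.LeftInverse.injective (g := fun a => (e a).1) hf, ?_⟩
  rintro x y hxy _ ⟨hz, z, hzy, rfl⟩
  refine ⟨z, ?_, rfl⟩
  rcases (hchain y).total hzy hxy with h | h
  · exact h
  · rcases h.eq_or_lt with rfl | h
    · exact le_rfl
    · exact absurd hz (havoid x z h)
end

section
/- For every positive integer n, the order-dimension of the truncated cube B_{n+2}(≤n) equals n+1; that is, B_{n+2}(≤n) order-embeds into a product of n+1 linearly ordered sets, but does not order-embed into a product of n linearly ordered sets. -/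
/-!
Upper bound: write `ω = n + 1` for the last point and let the `i`-th coordinate (`i ≤ n`) of a set
`X` be `2·[i ∈ X] + [ω ∈ X]`. These maps are monotone. Let `a ∈ X \ Y`. If `a = i ≠ ω`,
coordinate `i` is at least `2` on `X` and at most `1` on `Y`. If `a = ω`, then `Y` is not the whole
set, so `|Y| ≤ n` and `Y` misses a second point `i`; coordinate `i` is positive on `X` and `0` on
`Y`.

Lower bound: given an embedding into `n` chains, write `v i a` for the `i`-th coordinate of `{a}`.
Comparing `{a}` with the complement of `{a, b}` shows that for all `a ≠ b` some chain `i` has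
`v i c < v i a` for every `c ∉ {a, b}`. Since `n < n + 2`, some point `x` is not the strict maximum
of `v i` for any `i`. Hence in a chain `i` serving the pair `(x, b)` the point `b` is the only one
with `v i x ≤ v i b`, so `i` determines `b`, and the `n + 1` points `b ≠ x` inject into `n` chains.
-/

universe u v w

open Cardinal

/-- The truncated cube `B_m(≤r)`: all subsets `X` of `{0,…,m-1}` with `|X| ≤ r` or
`X = {0,…,m-1}`, ordered by inclusion. -/
abbrev TruncCube (m r : ℕ) : Type := {X : Finset (Fin m) // X.card ≤ r ∨ X = Finset.univ}

/-- `P` order-embeds into a product of `n` linearly ordered sets (with componentwise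
ordering); that is, the order-dimension of `P` is at most `n`. -/
def EmbedsInChainProd (P : Type v) [PartialOrder P] (n : ℕ) : Prop :=
  ∃ (C : Fin n → Type w) (inst : ∀ i, LinearOrder (C i)) (f : P → ∀ i, C i),
    ∀ x y : P, x ≤ y ↔ ∀ i, (inst i).le (f x i) (f y i)

/-- No `n` linearly ordered families on `n + 2` points are such that every point `a`, for every
other point `b`, beats in some family all points outside `{a, b}`. -/
lemma not_exists_beating {n : ℕ} {C : Fin n → Type w} [∀ i, LinearOrder (C i)]
    (v : ∀ i, Fin (n + 2) → C i)
    (h : ∀ a b, a ≠ b → ∃ i, ∀ c, c ≠ a → c ≠ b → v i c < v i a) : False := by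
  obtain ⟨x, hx⟩ : ∃ x, ∀ i, ∃ c, c ≠ x ∧ v i x ≤ v i c := by
    by_contra! hcon
    choose g hg using hcon
    have hinj : Function.Injective g := by
      intro a b hab
      by_contra hne
      have h1 := hg a b (Ne.symm hne)
      have h2 := hg b a hne
      rw [← hab] at h2
      exact lt_asymm h1 h2
    have := Fintype.card_le_of_injective g hinj
    simp at this
  have h' : ∀ b : {b // b ≠ x}, ∃ i, ∀ c, c ≠ x → c ≠ b.1 → v i c < v i x :=
    fun b => h x b.1 b.2.symm
  choose g hg using h'
  have hinj : Function.Injective g := by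
    intro b b' hbb
    -- the point not below `x` in chain `g b` can only be `b`, and likewise only `b'`
    obtain ⟨c, hcx, hc⟩ := hx (g b)
    have h1 : c = b.1 := by
      by_contra hne
      exact absurd (hg b c hcx hne) (not_lt.mpr hc)
    have h2 : c = b'.1 := by
      by_contra hne
      have := hg b' c hcx hne
      rw [← hbb] at this
      exact absurd this (not_lt.mpr hc)
    exact Subtype.ext (h1.symm.trans h2)
  have := Fintype.card_le_of_injective g hinj
  simp [Fintype.card_subtype_compl] at this

lemma truncCube_embeds (n : ℕ) : EmbedsInChainProd.{0, w} (TruncCube (n + 2) n) (n + 1) := by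
  refine ⟨fun _ => ULift.{w} ℕ, fun _ => inferInstance, fun X i =>
    ⟨2 * (if i.castSucc ∈ X.1 then 1 else 0) + (if Fin.last (n + 1) ∈ X.1 then 1 else 0)⟩, ?_⟩
  intro X Y
  constructor
  · intro hXY i
    have h1 : i.castSucc ∈ X.1 → i.castSucc ∈ Y.1 := fun h => hXY h
    have h2 : Fin.last (n + 1) ∈ X.1 → Fin.last (n + 1) ∈ Y.1 := fun h => hXY h
    change (_ : ℕ) ≤ _
    dsimp only
    split_ifs <;> first | omega | tauto
  · intro h a ha
    have h' : ∀ i : Fin (n + 1),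
        2 * (if i.castSucc ∈ X.1 then 1 else 0) + (if Fin.last (n + 1) ∈ X.1 then 1 else 0)
        ≤ 2 * (if i.castSucc ∈ Y.1 then 1 else 0) + (if Fin.last (n + 1) ∈ Y.1 then 1 else 0) :=
      fun i => h i
    by_contra haY
    induction a using Fin.lastCases with
    | cast i =>
      have := h' i
      rw [if_pos ha, if_neg haY] at this
      split_ifs at this <;> omega
    | last =>
      have hcard : Y.1.card ≤ n := by
        rcases Y.2 with hY | hY
        · exact hY
        · exact absurd (by rw [hY]; exact Finset.mem_univ _) haY
      obtain ⟨i, hi⟩ : ∃ i : Fin (n + 1), i.castSucc ∉ Y.1 := by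
        by_contra! hall
        have hsub : Finset.univ.map Fin.castSuccEmb ⊆ Y.1 := by
          intro c hc
          obtain ⟨i, -, rfl⟩ := Finset.mem_map.mp hc
          exact hall i
        have := Finset.card_le_card hsub
        simp at this
        omega
      have := h' i
      rw [if_pos ha, if_neg haY, if_neg hi] at this
      omega

lemma truncCube_not_embeds (n : ℕ) (hn : 0 < n) :
    ¬ EmbedsInChainProd.{0, w} (TruncCube (n + 2) n) n := by
  rintro ⟨C, inst, f, hf⟩
  let s : Fin (n + 2) → TruncCube (n + 2) n :=
    fun a => ⟨{a}, Or.inl (by rw [Finset.card_singleton]; exact hn)⟩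
  refine not_exists_beating (fun i a => f (s a) i) ?_
  intro a b hab
  let S : TruncCube (n + 2) n :=
    ⟨({a, b} : Finset (Fin (n + 2)))ᶜ, Or.inl (by
      rw [Finset.card_compl, Finset.card_pair hab, Fintype.card_fin]; omega)⟩
  have hS : ¬ s a ≤ S := by
    intro hle
    have : a ∈ S.1 := hle (Finset.mem_singleton_self a)
    simp [S] at this
  rw [hf] at hS
  push Not at hS
  obtain ⟨i, hi⟩ := hS
  refine ⟨i, fun c hca hcb => lt_of_le_of_lt ?_ hi⟩
  refine (hf (s c) S).mp ?_ i
  intro d hd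
  rw [Finset.mem_singleton.mp hd]
  simp [S, hca, hcb]

/-- The order-dimension of `B_{n+2}(≤n)` is `n+1`: it order-embeds into a product of
`n+1` chains but not into a product of `n` chains. -/
theorem stmt14 (n : ℕ) (hn : 0 < n) :
    EmbedsInChainProd.{0, w} (TruncCube (n + 2) n) (n + 1) ∧
    ¬ EmbedsInChainProd.{0, w} (TruncCube (n + 2) n) n := by
  exact ⟨truncCube_embeds n, truncCube_not_embeds n hn⟩
end

section
/- Let m and r be integers with 1 ≤ r < m and let d be a positive integer. Then B_m(≤r) order-embeds into a product of d linearly ordered sets if and only if B_m(1,r) order-embeds into a product of d linearly ordered sets; consequently the order-dimensions of B_m(≤r) and B_m(1,r) are equal. -/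
/-!
Restricting an embedding of `B_m(≤r)` to `B_m(1,r)` gives one direction. Conversely, let `f` embed
`B_m(1,r)` in a product of chains `C i`, and send a set `X` to the point whose `i`-th coordinate is
the maximum of `f {x} i` over `x ∈ X` (a new bottom element when `X` is empty). This map is
monotone. If `Y ⊄ X`, then `X` is not the full set, so `|X| ≤ r`; choose `x ∈ Y \ X` and an
`r`-set `R ⊇ X` avoiding `x`, which exists since `r < m`. As `{x} ⊄ R`, some coordinate `i` has
`f {y} i ≤ f R i < f {x} i` for all `y ∈ R`, so the image of `Y` is not below that of `X`.
-/

universe u v w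

open Cardinal

/-- `B_m(1,r)`: all subsets of `{0,…,m-1}` of cardinality `1` or `r`, ordered by
inclusion. -/
abbrev Bm1r (m r : ℕ) : Type := {X : Finset (Fin m) // X.card = 1 ∨ X.card = r}

/-- For `1 ≤ r < m` and any positive integer `d`: `B_m(≤r)` order-embeds into a product
of `d` chains iff `B_m(1,r)` does; consequently `dim B_m(≤r) = dim B_m(1,r)`. -/
theorem stmt17 (m r d : ℕ) (hr : 1 ≤ r) (hrm : r < m) (hd : 0 < d) :
    EmbedsInChainProd.{0, w} (TruncCube m r) d ↔ EmbedsInChainProd.{0, w} (Bm1r m r) d := by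
  constructor
  · rintro ⟨C, inst, f, hf⟩
    have hmem : ∀ X : Bm1r m r, X.1.card ≤ r ∨ X.1 = Finset.univ := by
      rintro ⟨X, hX | hX⟩
      · exact Or.inl (hX.trans_le hr)
      · exact Or.inl hX.le
    exact ⟨C, inst, fun X => f ⟨X.1, hmem X⟩, fun x y => hf ⟨x.1, hmem x⟩ ⟨y.1, hmem y⟩⟩
  · rintro ⟨C, inst, f, hf⟩
    let s : Fin m → Bm1r m r := fun x => ⟨{x}, Or.inl (Finset.card_singleton x)⟩
    refine ⟨fun i => WithBot (C i), fun i => inferInstance,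
      fun X i => X.1.sup fun x => (f (s x) i : WithBot (C i)), fun Y X => ⟨fun h i => ?_, ?_⟩⟩
    · exact Finset.sup_mono h
    · intro h x hxY
      by_contra hxX
      have hX : X.1.card ≤ r := X.2.resolve_right fun hu => hxX (by rw [hu]; exact Finset.mem_univ x)
      obtain ⟨R, hXR, hRx, hR⟩ :=
        Finset.exists_subsuperset_card_eq (s := X.1) (t := Finset.univ.erase x) (n := r)
          (fun y hy => Finset.mem_erase.2 ⟨fun e => hxX (e ▸ hy), Finset.mem_univ y⟩) hX
          (by rw [Finset.card_erase_of_mem (Finset.mem_univ x), Finset.card_fin]; omega)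
      have hxR : x ∉ R := fun hx => Finset.notMem_erase x _ (hRx hx)
      let R' : Bm1r m r := ⟨R, Or.inr hR⟩
      have hn : ¬ s x ≤ R' := fun hle => hxR (hle (Finset.mem_singleton_self x))
      rw [hf] at hn
      push Not at hn
      obtain ⟨i, hi⟩ := hn
      have hlt : (X.1.sup fun y => (f (s y) i : WithBot (C i))) < (f (s x) i : WithBot (C i)) := by
        rw [Finset.sup_lt_iff (WithBot.bot_lt_coe _)]
        intro y hy
        have hle : s y ≤ R' := Finset.singleton_subset_iff.2 (hXR hy)
        exact WithBot.coe_lt_coe.2 (((hf _ _).1 hle i).trans_lt hi)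
      exact absurd ((Finset.le_sup (f := fun y => (f (s y) i : WithBot (C i))) hxY).trans (h i))
        hlt.not_ge
end
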